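/- Let G be a finite connected undirected multigraph and A a finite Abelian group. Then the number of balanced functions h:V∪E→A equals |A|^{|V|+con₃(G)−1}, where con₃(G) is the number of 3-edge-connected equivalence classes of vertices of G. -/

import Mathlib

open Finset

/-- A finite undirected multigraph: each edge `e : E` has an unordered pair of
endpoints `ends e : Sym2 V`.  Loops and parallel edges are allowed and the graph
need not be connected. -/
structure Multigraph (V E : Type*) where
  ends : E → Sym2 V

namespace Multigraph

variable {V E : Type*}

/-- `G.IsChain x y p` : `p` is an alternating sequence `v₁,e₁,…,vₙ,eₙ` (encoded as a
list of vertex-edge pairs) which forms a walk from `x` to `y` (the final vertex `y`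
is omitted, i.e. this is "truncated"). -/
def IsChain (G : Multigraph V E) : V → V → List (V × E) → Prop
  | x, y, [] => x = y
  | x, y, (v, e) :: rest => v = x ∧ ∃ w, G.ends e = s(x, w) ∧ G.IsChain w y rest

/-- A truncated trail (ttrail) from `x` to `y`: an alternating walk with no repeated
edges, final vertex omitted. -/
def IsTtrail (G : Multigraph V E) (x y : V) (p : List (V × E)) : Prop :=
  G.IsChain x y p ∧ (p.map Prod.snd).Nodup

/-- A cycle: a closed ttrail with no repeated vertices. -/
def IsCycle (G : Multigraph V E) (x : V) (p : List (V × E)) : Prop :=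
  G.IsTtrail x x p ∧ (p.map Prod.fst).Nodup

/-- Two ttrails are edge-disjoint if they have no common edges. -/
def EdgeDisjoint (p q : List (V × E)) : Prop :=
  ∀ e, e ∈ p.map Prod.snd → e ∉ q.map Prod.snd

/-- `k`-edge-connectivity: two distinct vertices are `k`-edge-connected if there are
`k` pairwise edge-disjoint ttrails between them; every vertex is `k`-edge-connected
to itself. -/
def KConn (G : Multigraph V E) (k : ℕ) (v w : V) : Prop :=
  v = w ∨ ∃ p : Fin k → List (V × E),
    (∀ i, G.IsTtrail v w (p i)) ∧ ∀ i j, i ≠ j → EdgeDisjoint (p i) (p j)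

/-- `conk G k` : the number of equivalence classes of `k`-edge-connected vertices. -/
noncomputable def conk (G : Multigraph V E) (k : ℕ) : ℕ :=
  Nat.card (Quotient (Relation.EqvGen.setoid (G.KConn k)))

/-- The number of connected components of `G`. -/
noncomputable def con (G : Multigraph V E) : ℕ := G.conk 1

section Homology

variable [Fintype V] [Fintype E] [DecidableEq V] [DecidableEq E]

/-- The vector in `F₂^V` which is the sum of the two endpoints of the edge `e`
(so a loop is sent to `0`). -/
def edgeVec (G : Multigraph V E) (e : E) : V → ZMod 2 := fun v =>
  Sym2.lift ⟨fun a b => (if v = a then (1 : ZMod 2) else 0) + (if v = b then 1 else 0),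
    fun _ _ => add_comm _ _⟩ (G.ends e)

/-- The boundary map `δ : F₂^E → F₂^V`, sending each edge to the sum of its two
adjacent vertices. -/
def boundary (G : Multigraph V E) : (E → ZMod 2) →ₗ[ZMod 2] (V → ZMod 2) where
  toFun c := fun v => ∑ e, c e * G.edgeVec e v
  map_add' c d := by
    funext v
    simp [add_mul, Finset.sum_add_distrib]
  map_smul' r c := by
    funext v
    simp [Finset.mul_sum, mul_assoc]

/-- The Cycle Space of `G` : the kernel of the boundary map. -/
def cycleSpace (G : Multigraph V E) : Submodule (ZMod 2) (E → ZMod 2) :=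
  LinearMap.ker G.boundary

/-- The indicator vector of a vertex in `F₂^V`. -/
def vert (v : V) : V → ZMod 2 := fun w => if w = v then 1 else 0

/-- A `k`-weak homological cycle: a homological path between two `k`-edge-connected
vertices. -/
def IsWeakCycle (G : Multigraph V E) (k : ℕ) (c : E → ZMod 2) : Prop :=
  ∃ v w, G.KConn k v w ∧ G.boundary c = vert v + vert w

/-- The `k`-Weak Cycle Space: the span of all `k`-weak homological cycles. -/
def weakCycleSpace (G : Multigraph V E) (k : ℕ) : Submodule (ZMod 2) (E → ZMod 2) :=
  Submodule.span (ZMod 2) {c | G.IsWeakCycle k c}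

/-- `eps p` : the set of edges of the ttrail `p`, as a vector in `F₂^E`. -/
def eps (p : List (V × E)) : E → ZMod 2 := fun e => if e ∈ p.map Prod.snd then 1 else 0

/-- The `F₂`-linear extension of `f : E → A` to subsets of `E`: the sum of `f` over
the edges of the subset `S`. -/
def fSum {A : Type*} [AddCommGroup A] (f : E → A) (S : E → ZMod 2) : A :=
  ∑ e ∈ Finset.univ.filter fun e => S e = 1, f e

end Homology

section Balanced

variable {A : Type*} [AddCommGroup A]

/-- The sum `g(v₁)+f(e₁)+…+g(vₙ)+f(eₙ)` of the values of a vertex-function `g` and an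
edge-function `f` along a ttrail `v₁,e₁,…,vₙ,eₙ`. -/
def pathSum (g : V → A) (f : E → A) (p : List (V × E)) : A :=
  (p.map fun ve => g ve.1 + f ve.2).sum

/-- The sum `h(v₁)+h(e₁)+…+h(vₙ)+h(eₙ)` of the values of `h : V ∪ E → A` along a
ttrail `v₁,e₁,…,vₙ,eₙ`. -/
def wSum (h : V ⊕ E → A) (p : List (V × E)) : A :=
  (p.map fun ve => h (Sum.inl ve.1) + h (Sum.inr ve.2)).sum

lemma pathSum_cons (g : V → A) (f : E → A) (a : V × E) (t : List (V × E)) :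
    pathSum g f (a :: t) = (g a.1 + f a.2) + pathSum g f t := by
  simp [pathSum]

lemma pathSum_zero (p : List (V × E)) : pathSum (0 : V → A) (0 : E → A) p = 0 := by
  induction p with
  | nil => simp [pathSum]
  | cons a t ih => simp [pathSum_cons, ih]

lemma pathSum_add (g g' : V → A) (f f' : E → A) (p : List (V × E)) :
    pathSum (g + g') (f + f') p = pathSum g f p + pathSum g' f' p := by
  induction p with
  | nil => simp [pathSum]
  | cons a t ih => simp only [pathSum_cons, Pi.add_apply, ih]; abel

lemma pathSum_neg (g : V → A) (f : E → A) (p : List (V × E)) :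
    pathSum (-g) (-f) p = -pathSum g f p := by
  induction p with
  | nil => simp [pathSum]
  | cons a t ih => simp only [pathSum_cons, Pi.neg_apply, ih]; abel

lemma wSum_cons (h : V ⊕ E → A) (a : V × E) (t : List (V × E)) :
    wSum h (a :: t) = (h (Sum.inl a.1) + h (Sum.inr a.2)) + wSum h t := by
  simp [wSum]

lemma wSum_zero (p : List (V × E)) : wSum (0 : V ⊕ E → A) p = 0 := by
  induction p with
  | nil => simp [wSum]
  | cons a t ih => simp [wSum_cons, ih]

lemma wSum_add (h h' : V ⊕ E → A) (p : List (V × E)) :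
    wSum (h + h') p = wSum h p + wSum h' p := by
  induction p with
  | nil => simp [wSum]
  | cons a t ih => simp only [wSum_cons, Pi.add_apply, ih]; abel

lemma wSum_neg (h : V ⊕ E → A) (p : List (V × E)) :
    wSum (-h) p = -wSum h p := by
  induction p with
  | nil => simp [wSum]
  | cons a t ih => simp only [wSum_cons, Pi.neg_apply, ih]; abel

/-- A function `f : E → A` is balanced if the sum of its values along every closed
ttrail of `G` is zero. -/
def BalancedE (G : Multigraph V E) (f : E → A) : Prop :=
  ∀ x p, G.IsTtrail x x p → pathSum (0 : V → A) f p = 0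

/-- A function `g : V → A` is balanceable if some `f : E → A` balances it, i.e. the
sum of the values of `g` and `f` along every closed ttrail of `G` is zero. -/
def Balanceable (G : Multigraph V E) (g : V → A) : Prop :=
  ∃ f : E → A, ∀ x p, G.IsTtrail x x p → pathSum g f p = 0

/-- A function `h : V ∪ E → A` is balanced if the sum of its values along every
closed ttrail of `G` is zero. -/
def BalancedW (G : Multigraph V E) (h : V ⊕ E → A) : Prop :=
  ∀ x p, G.IsTtrail x x p → wSum h p = 0

/-- `H(E,A)` : the group of balanced functions from `E` to `A`. -/
def Hgroup (G : Multigraph V E) (A : Type*) [AddCommGroup A] : AddSubgroup (E → A) where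
  carrier := {f | G.BalancedE f}
  zero_mem' := fun _ p _ => pathSum_zero p
  add_mem' := by
    intro f f' hf hf' x p hp
    have h := pathSum_add (0 : V → A) 0 f f' p
    rw [add_zero] at h
    rw [h, hf x p hp, hf' x p hp, add_zero]
  neg_mem' := by
    intro f hf x p hp
    have h := pathSum_neg (0 : V → A) f p
    rw [neg_zero] at h
    rw [h, hf x p hp, neg_zero]

/-- `B(V,A)` : the group of balanceable functions from `V` to `A`. -/
def Bgroup (G : Multigraph V E) (A : Type*) [AddCommGroup A] : AddSubgroup (V → A) where
  carrier := {g | G.Balanceable g}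
  zero_mem' := ⟨0, fun _ p _ => pathSum_zero p⟩
  add_mem' := by
    rintro g g' ⟨f, hf⟩ ⟨f', hf'⟩
    exact ⟨f + f', fun x p hp => by rw [pathSum_add, hf x p hp, hf' x p hp, add_zero]⟩
  neg_mem' := by
    rintro g ⟨f, hf⟩
    exact ⟨-f, fun x p hp => by rw [pathSum_neg, hf x p hp, neg_zero]⟩

/-- `W(V ∪ E, A)` : the group of balanced functions from `V ∪ E` to `A`. -/
def Wgroup (G : Multigraph V E) (A : Type*) [AddCommGroup A] : AddSubgroup (V ⊕ E → A) where
  carrier := {h | G.BalancedW h}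
  zero_mem' := fun _ p _ => wSum_zero p
  add_mem' := by
    intro h h' hh hh' x p hp
    rw [wSum_add, hh x p hp, hh' x p hp, add_zero]
  neg_mem' := by
    intro h hh x p hp
    rw [wSum_neg, hh x p hp, neg_zero]

end Balanced

/-- A `3`-weakly closed ttrail (a ttrail between `3`-edge-connected vertices) which is
short: no inner vertex is `3`-edge-connected to the initial vertex. -/
def ShortW (G : Multigraph V E) (x y : V) (p : List (V × E)) : Prop :=
  G.IsTtrail x y p ∧ G.KConn 3 x y ∧ ∀ v ∈ (p.map Prod.fst).tail, ¬ G.KConn 3 v x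

/-- `G.ShortChain x y L` : `L` is a list of nontrivial short `3`-weakly closed ttrails
which concatenate into a ttrail from `x` to `y`. -/
def ShortChain (G : Multigraph V E) : V → V → List (List (V × E)) → Prop
  | x, y, [] => x = y
  | x, y, s :: rest => s ≠ [] ∧ ∃ z, G.ShortW x z s ∧ G.ShortChain z y rest

/-- `A₂` : the subgroup of elements of order dividing `2` in `A`. -/
def torsion2 (A : Type*) [AddCommGroup A] : AddSubgroup A where
  carrier := {a | 2 • a = 0}
  zero_mem' := by simp
  add_mem' := by
    intro a b ha hb
    simp only [Set.mem_setOf_eq] at *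
    rw [smul_add, ha, hb, add_zero]
  neg_mem' := by
    intro a ha
    simp only [Set.mem_setOf_eq] at *
    rw [smul_neg, ha, neg_zero]

/-- `2A` : the image of the doubling map `a ↦ 2a`. -/
def double2 (A : Type*) [AddCommGroup A] : AddSubgroup A where
  carrier := {b | ∃ a, b = 2 • a}
  zero_mem' := ⟨0, by simp⟩
  add_mem' := by
    rintro a b ⟨x, rfl⟩ ⟨y, rfl⟩
    exact ⟨x + y, by rw [smul_add]⟩
  neg_mem' := by
    rintro a ⟨x, rfl⟩
    exact ⟨-x, by rw [smul_neg]⟩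

end Multigraph

namespace Multigraph

section Menger

variable {V E : Type*}

open Classical in
/-- Sign-free indicator in the integers. -/
noncomputable def ind (P : Prop) : ℤ := if P then 1 else 0

/-- A choice of tail / head of a dart. -/
noncomputable def src (G : Multigraph V E) (d : E × Bool) : V :=
  if d.2 then (G.ends d.1).out.1 else (G.ends d.1).out.2

/-- The head of a dart. -/
noncomputable def dst (G : Multigraph V E) (d : E × Bool) : V :=
  if d.2 then (G.ends d.1).out.2 else (G.ends d.1).out.1

lemma ends_out (G : Multigraph V E) (e : E) :
    G.ends e = s((G.ends e).out.1, (G.ends e).out.2) := by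
  conv_lhs => rw [← Quot.out_eq (G.ends e)]

lemma ends_dart (G : Multigraph V E) (d : E × Bool) : G.ends d.1 = s(G.src d, G.dst d) := by
  unfold src dst
  conv_lhs => rw [ends_out]
  split_ifs
  · rfl
  · exact Sym2.eq_swap

lemma src_flip (G : Multigraph V E) (e : E) (b : Bool) : G.src (e, !b) = G.dst (e, b) := by
  cases b <;> simp [src, dst]

/-- Chains of darts. -/
def DChain (G : Multigraph V E) : V → V → List (E × Bool) → Prop
  | x, y, [] => x = y
  | x, y, d :: r => G.src d = x ∧ G.DChain (G.dst d) y r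

lemma DChain.append {G : Multigraph V E} : ∀ {p q : List (E × Bool)} {x y z : V},
    G.DChain x y p → G.DChain y z q → G.DChain x z (p ++ q)
  | [], q, x, y, z, h, h' => by cases h; exact h'
  | d :: p, q, x, y, z, h, h' => ⟨h.1, h.2.append h'⟩

lemma DChain.split {G : Multigraph V E} : ∀ {p q : List (E × Bool)} {x z : V},
    G.DChain x z (p ++ q) → ∃ y, G.DChain x y p ∧ G.DChain y z q
  | [], q, x, z, h => ⟨x, rfl, h⟩
  | d :: p, q, x, z, h => by
    obtain ⟨y, h1, h2⟩ := DChain.split h.2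
    exact ⟨y, ⟨h.1, h1⟩, h2⟩

lemma DChain.isChain {G : Multigraph V E} : ∀ {p : List (E × Bool)} {x y : V},
    G.DChain x y p → G.IsChain x y (p.map fun d => (G.src d, d.1))
  | [], x, y, h => h
  | d :: p, x, y, h => ⟨h.1, G.dst d, by rw [← h.1]; exact G.ends_dart d, h.2.isChain⟩

lemma reach (G : Multigraph V E) (al : E × Bool → Prop) (x y : V) :
    (∃ p, G.DChain x y p ∧ (p.map Prod.fst).Nodup ∧ ∀ d ∈ p, al d) ∨
    ∃ S : Set V, x ∈ S ∧ y ∉ S ∧ ∀ d, al d → G.src d ∈ S → G.dst d ∈ S := by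
  by_cases h : ∃ p, G.DChain x y p ∧ (p.map Prod.fst).Nodup ∧ ∀ d ∈ p, al d
  · exact Or.inl h
  refine Or.inr ⟨{v | ∃ p, G.DChain x v p ∧ (p.map Prod.fst).Nodup ∧ ∀ d ∈ p, al d},
    ⟨[], rfl, by simp, by simp⟩, h, ?_⟩
  rintro ⟨e, b⟩ had ⟨p, hp, hn, ha⟩
  by_cases he : e ∈ p.map Prod.fst
  · obtain ⟨⟨e', b'⟩, hm, rfl⟩ := List.mem_map.1 he
    obtain ⟨p1, p2, rfl⟩ := List.append_of_mem hm
    obtain ⟨z, h1, h2⟩ := hp.split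
    have hn' := hn
    rw [List.map_append, List.nodup_append] at hn
    by_cases hb : b' = b
    · subst hb
      refine ⟨p1 ++ [(e', b')], h1.append ⟨h2.1, rfl⟩, ?_, ?_⟩
      · refine hn'.sublist ?_
        simp
      · intro d hd
        apply ha
        simp at hd ⊢
        tauto
    · have hb' : b' = !b := by cases b <;> cases b' <;> simp_all
      subst hb'
      refine ⟨p1, ?_, hn.1, fun d hd => ha d (by simp [hd])⟩
      have := h2.1
      simp only [src_flip] at this
      change G.DChain x (G.dst (e', b)) p1
      rw [this]; exact h1
  · refine ⟨p ++ [(e, b)], hp.append ⟨rfl, rfl⟩, ?_, ?_⟩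
    · rw [List.map_append, List.nodup_append]
      refine ⟨hn, by simp, ?_⟩
      intro a ha' c hc
      simp at hc
      subst hc
      rintro rfl
      exact he ha'
    · intro d hd
      rcases List.mem_append.1 hd with hd | hd
      · exact ha d hd
      · simp at hd; subst hd; exact had

/-- sign of a dart -/
def sgn (b : Bool) : ℤ := if b then 1 else -1

open Classical in
/-- signed indicator of a dart list -/
noncomputable def cvec (p : List (E × Bool)) (e : E) : ℤ :=
  (p.map fun d => if d.1 = e then sgn d.2 else 0).sum

lemma cvec_cons (d : E × Bool) (p : List (E × Bool)) (e : E) [Decidable (d.1 = e)] :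
    cvec (d :: p) e = (if d.1 = e then sgn d.2 else 0) + cvec p e := by
  simp only [cvec, List.map_cons, List.sum_cons]
  congr

lemma cvec_not_mem : ∀ (p : List (E × Bool)) (e : E), e ∉ p.map Prod.fst → cvec p e = 0
  | [], e, _ => by simp [cvec]
  | d :: p, e, h => by
    classical
    simp only [List.map_cons, List.mem_cons, not_or] at h
    rw [cvec_cons, cvec_not_mem p e h.2, if_neg (Ne.symm h.1)]; simp

lemma cvec_mem : ∀ (p : List (E × Bool)) (d : E × Bool), (p.map Prod.fst).Nodup → d ∈ p →
    cvec p d.1 = sgn d.2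
  | [], e, _, h => by simp at h
  | d' :: p, d, hn, h => by
    classical
    simp only [List.map_cons, List.nodup_cons] at hn
    rw [cvec_cons]
    rcases List.mem_cons.1 h with rfl | h
    · rw [cvec_not_mem p _ hn.1]; simp
    · rw [cvec_mem p d hn.2 h, if_neg]; · simp
      intro hh
      exact hn.1 (hh ▸ List.mem_map_of_mem h)

/-- crossing coefficient -/
noncomputable def dlt (G : Multigraph V E) (S : Set V) (e : E) : ℤ :=
  ind ((G.ends e).out.1 ∈ S) - ind ((G.ends e).out.2 ∈ S)

/-- crossing -/
def Cross (G : Multigraph V E) (S : Set V) (e : E) : Prop :=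
  ∃ a b, G.ends e = s(a, b) ∧ a ∈ S ∧ b ∉ S

lemma cross_iff {G : Multigraph V E} {S : Set V} {e : E} {a b : V} (h : G.ends e = s(a, b)) :
    G.Cross S e ↔ ¬ (a ∈ S ↔ b ∈ S) := by
  constructor
  · rintro ⟨c, d, h', hc, hd⟩
    rw [h] at h'
    rcases Sym2.eq_iff.1 h' with ⟨rfl, rfl⟩ | ⟨rfl, rfl⟩ <;> tauto
  · intro hh
    by_cases ha : a ∈ S
    · exact ⟨a, b, h, ha, by tauto⟩
    · exact ⟨b, a, by rw [h, Sym2.eq_swap], by tauto, ha⟩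

variable [Fintype E]

open Classical in
/-- The number of crossing edges. -/
noncomputable def cutn (G : Multigraph V E) (S : Set V) : ℕ := #{e | G.Cross S e}

/-- flows -/
def Flow (G : Multigraph V E) (x y : V) (k : ℤ) (f : E → ℤ) : Prop :=
  (∀ e, -1 ≤ f e ∧ f e ≤ 1) ∧
    ∀ S : Set V, ∑ e, f e * G.dlt S e = k * (ind (x ∈ S) - ind (y ∈ S))

lemma cvec_flow (G : Multigraph V E) (S : Set V) : ∀ (p : List (E × Bool)) (x y : V),
    G.DChain x y p → ∑ e, cvec p e * G.dlt S e = ind (x ∈ S) - ind (y ∈ S)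
  | [], x, y, h => by cases h; simp [cvec]
  | d :: p, x, y, h => by
    classical
    have ih := cvec_flow G S p _ _ h.2
    simp only [cvec_cons, add_mul, Finset.sum_add_distrib, ih]
    simp only [ite_mul, zero_mul, Finset.sum_ite_eq, Finset.mem_univ, if_true]
    rw [← h.1]
    obtain ⟨e, b⟩ := d
    cases b <;> simp [sgn, dlt, src, dst]

lemma flow_exists (G : Multigraph V E) (x y : V) (k : ℕ)
    (hc : ∀ S : Set V, x ∈ S → y ∉ S → k ≤ G.cutn S) : ∃ f, G.Flow x y k f := by
  induction k with
  | zero => exact ⟨0, by simp, by simp⟩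
  | succ k ih =>
    obtain ⟨f, hb, hf⟩ := ih (fun S h1 h2 => by have := hc S h1 h2; omega)
    rcases G.reach (fun d => f d.1 * sgn d.2 < 1) x y with ⟨p, hp, hn, ha⟩ | ⟨S, hx, hy, hS⟩
    · refine ⟨fun e => f e + cvec p e, ?_, ?_⟩
      · intro e
        beta_reduce
        by_cases he : e ∈ p.map Prod.fst
        · obtain ⟨d, hd, rfl⟩ := List.mem_map.1 he
          rw [cvec_mem p d hn hd]
          have h1 := ha d hd
          have h2 := hb d.1
          obtain ⟨e, b⟩ := d
          cases b <;> simp [sgn] at * <;> omega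
        · rw [cvec_not_mem p e he]; simpa using hb e
      · intro S
        simp only [add_mul, Finset.sum_add_distrib, hf, cvec_flow G S p x y hp]
        push_cast; ring
    · exfalso
      have h1 := hf S
      have h2 := hc S hx hy
      have h3 : ∑ e, f e * G.dlt S e = G.cutn S := by
        classical
        rw [cutn, Finset.card_filter]
        push_cast
        apply Finset.sum_congr rfl
        intro e _
        have ht := hS (e, true)
        have hff := hS (e, false)
        have hbe := hb e
        have hcr := cross_iff (S := S) (G.ends_out e)
        simp only [src, dst, sgn, dlt, ind] at *
        by_cases ha : (G.ends e).out.1 ∈ S <;> by_cases hb' : (G.ends e).out.2 ∈ S <;>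
          simp [ha, hb'] at * <;> simp [hcr] <;> omega
      rw [h3] at h1
      simp [ind, hx, hy] at h1
      omega

lemma flow_decomp (G : Multigraph V E) (x y : V) (k : ℕ) : ∀ f, G.Flow x y k f →
    ∃ P : Fin k → List (V × E), (∀ i, G.IsTtrail x y (P i)) ∧
      (∀ i j, i ≠ j → EdgeDisjoint (P i) (P j)) ∧
      ∀ i, ∀ e ∈ (P i).map Prod.snd, x = y ∨ f e ≠ 0 := by
  induction k with
  | zero => intro f _; exact ⟨fun i => i.elim0, fun i => i.elim0, fun i => i.elim0, fun i => i.elim0⟩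
  | succ k ih =>
    rintro f ⟨hb, hf⟩
    rcases G.reach (fun d => 0 < f d.1 * sgn d.2) x y with ⟨p, hp, hn, ha⟩ | ⟨S, hx, hy, hS⟩
    · have hv : ∀ e, (e ∈ p.map Prod.fst → f e - cvec p e = 0 ∧ f e ≠ 0) ∧
          (e ∉ p.map Prod.fst → f e - cvec p e = f e) := by
        intro e
        refine ⟨fun he => ?_, fun he => by rw [cvec_not_mem p e he]; simp⟩
        obtain ⟨d, hd, rfl⟩ := List.mem_map.1 he
        rw [cvec_mem p d hn hd]
        have h1 := ha d hd
        have h2 := hb d.1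
        obtain ⟨e, b⟩ := d
        cases b <;> simp [sgn] at * <;> omega
      obtain ⟨P, h1, h2, h3⟩ := ih (fun e => f e - cvec p e) ⟨by
          intro e
          beta_reduce
          by_cases he : e ∈ p.map Prod.fst
          · rw [((hv e).1 he).1]; simp
          · rw [(hv e).2 he]; exact hb e, by
          intro S
          simp only [sub_mul, Finset.sum_sub_distrib, hf, cvec_flow G S p x y hp]
          push_cast; ring⟩
      by_cases hxy : x = y
      · subst hxy
        refine ⟨fun _ => [], fun i => ⟨rfl, by simp⟩, fun i j _ e h => by simp at h, by simp⟩
      have hm : (p.map fun d => (G.src d, d.1)).map Prod.snd = p.map Prod.fst := by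
        simp
      refine ⟨Fin.cons (p.map fun d => (G.src d, d.1)) P, ?_, ?_, ?_⟩
      · intro i
        refine Fin.cases ?_ (fun i => ?_) i
        · exact ⟨hp.isChain, by rw [Fin.cons_zero, hm]; exact hn⟩
        · exact h1 i
      · have key : ∀ j e, e ∈ (P j).map Prod.snd → e ∉ p.map Prod.fst := by
          intro j e he hep
          rcases h3 j e he with h | h
          · exact hxy h
          · exact h ((hv e).1 hep).1
        intro i j
        refine Fin.cases ?_ (fun i => ?_) i <;> refine Fin.cases ?_ (fun j => ?_) j
        · intro h; exact absurd rfl h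
        · intro _ e he he'
          rw [Fin.cons_zero, hm] at he
          exact key j e he' he
        · intro _ e he he'
          rw [Fin.cons_zero, hm] at he'
          exact key i e he he'
        · intro h
          exact h2 i j (fun hh => h (by rw [hh]))
      · intro i
        refine Fin.cases ?_ (fun i => ?_) i
        · intro e he
          rw [Fin.cons_zero, hm] at he
          exact Or.inr ((hv e).1 he).2
        · intro e he
          rcases h3 i e he with h | h
          · exact Or.inl h
          · right
            by_cases hep : e ∈ p.map Prod.fst
            · exact ((hv e).1 hep).2
            · rwa [(hv e).2 hep] at h
    · exfalso
      have h1 := hf S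
      have h3 : ∑ e, f e * G.dlt S e ≤ 0 := by
        apply Finset.sum_nonpos
        intro e _
        have ht := hS (e, true)
        have hff := hS (e, false)
        simp only [src, dst, sgn, dlt, ind] at *
        by_cases ha : (G.ends e).out.1 ∈ S <;> by_cases hb' : (G.ends e).out.2 ∈ S <;>
          simp [ha, hb'] at * <;> omega
      simp [ind, hx, hy] at h1
      omega

/-- Equivalence through cuts. -/
def CutEq (G : Multigraph V E) (u v : V) : Prop := ∀ S : Set V, u ∈ S → v ∉ S → 3 ≤ G.cutn S

lemma CutEq.kconn {G : Multigraph V E} {u v : V} (h : G.CutEq u v) : G.KConn 3 u v := by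
  obtain ⟨f, hf⟩ := flow_exists G u v 3 h
  obtain ⟨P, h1, h2, _⟩ := flow_decomp G u v 3 f hf
  exact Or.inr ⟨P, h1, h2⟩

lemma chain_cross {G : Multigraph V E} {S : Set V} : ∀ {p : List (V × E)} {x y : V},
    G.IsChain x y p → x ∈ S → y ∉ S → ∃ e ∈ p.map Prod.snd, G.Cross S e
  | [], x, y, h, hx, hy => by cases h; exact absurd hx hy
  | (v, e) :: p, x, y, ⟨_, w, he, h⟩, hx, hy => by
    by_cases hw : w ∈ S
    · obtain ⟨e', h1, h2⟩ := chain_cross h hw hy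
      exact ⟨e', by simp at h1 ⊢; tauto, h2⟩
    · exact ⟨e, by simp, x, w, he, hx, hw⟩

lemma KConn.cutEq {G : Multigraph V E} {u v : V} (h : G.KConn 3 u v) : G.CutEq u v := by
  intro S hu hv
  rcases h with rfl | ⟨P, h1, h2⟩
  · exact absurd hu hv
  classical
  choose g hg1 hg2 using fun i => chain_cross (h1 i).1 hu hv
  have hinj : Function.Injective g := by
    intro i j hij
    by_contra hne
    exact h2 i j hne _ (hg1 i) (hij ▸ hg1 j)
  have := Finset.card_le_card_of_injOn (s := Finset.univ) (t := {e | G.Cross S e}) g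
    (fun i _ => by simpa using hg2 i) hinj.injOn
  simpa [cutn] using this

lemma cross_compl {G : Multigraph V E} {S : Set V} {e : E} : G.Cross Sᶜ e ↔ G.Cross S e := by
  rw [cross_iff (G.ends_out e), cross_iff (G.ends_out e)]
  simp only [Set.mem_compl_iff]; tauto

lemma cutn_compl {G : Multigraph V E} {S : Set V} : G.cutn Sᶜ = G.cutn S := by
  classical
  unfold cutn
  congr 1
  ext e
  simp [cross_compl]

/-- The setoid of cut equivalence. -/
def cutSetoid (G : Multigraph V E) : Setoid V where
  r := G.CutEq
  iseqv := ⟨fun x S h h' => absurd h h', fun {x y} h S h1 h2 => by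
      rw [← cutn_compl]; exact h _ h2 (by simpa using h1),
    fun {x y z} h h' S h1 h2 => by
      by_cases hy : y ∈ S
      · exact h' S hy h2
      · exact h S h1 hy⟩

lemma conk_three (G : Multigraph V E) : G.conk 3 = Nat.card (Quotient G.cutSetoid) := by
  have : Relation.EqvGen.setoid (G.KConn 3) = G.cutSetoid := by
    ext u v
    constructor
    · intro h0
      have h : Relation.EqvGen (G.KConn 3) u v := h0
      clear h0
      induction h with
      | rel a b h => exact KConn.cutEq h
      | refl a => exact G.cutSetoid.iseqv.refl a
      | symm a b _ h => exact G.cutSetoid.iseqv.symm h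
      | trans a b c _ _ h h' => exact G.cutSetoid.iseqv.trans h h'
    · intro h
      exact Relation.EqvGen.rel _ _ (CutEq.kconn h)
  rw [conk, this]

end Menger

end Multigraph

namespace Multigraph

section Contract

variable {V V' E : Type*}

/-- Identification of vertices. -/
def mapV (G : Multigraph V E) (π : V → V') : Multigraph V' E := ⟨fun e => (G.ends e).map π⟩

/-- `π` identifies exactly `x` and `y`. -/
def Glues (π : V → V') (x y : V) : Prop :=
  ∀ u v, π u = π v ↔ u = v ∨ (u = x ∧ v = y) ∨ (u = y ∧ v = x)

lemma cross_mapV (G : Multigraph V E) (π : V → V') (S : Set V') (e : E) :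
    (G.mapV π).Cross S e ↔ G.Cross (π ⁻¹' S) e := by
  have h := G.ends_out e
  have h' : (G.mapV π).ends e = s(π (G.ends e).out.1, π (G.ends e).out.2) := by
    change (G.ends e).map π = _
    conv_lhs => rw [h]
    rfl
  rw [cross_iff h, cross_iff h']
  rfl

lemma card_glue {α β : Type*} [Finite α] (f : α → β) (hf : Function.Surjective f) (a b : α)
    (hab : a ≠ b) (hg : Glues f a b) : Nat.card α = Nat.card β + 1 := by
  classical
  have := Fintype.ofFinite α
  have e : {u : α // u ≠ b} ≃ β := Equiv.ofBijective (fun u => f u.1) (by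
    constructor
    · rintro ⟨u, hu⟩ ⟨v, hv⟩ h
      have := (hg u v).1 h
      simp; tauto
    · intro z
      obtain ⟨u, rfl⟩ := hf z
      by_cases hu : u = b
      · exact ⟨⟨a, hab⟩, (hg a u).2 (by tauto)⟩
      · exact ⟨⟨u, hu⟩, rfl⟩)
  rw [← Nat.card_congr e, Nat.card_eq_fintype_card, Nat.card_eq_fintype_card]
  have := Fintype.card_subtype_compl (fun u : α => u = b)
  simp only [Fintype.card_subtype_eq] at this
  have h2 : 0 < Fintype.card α := Fintype.card_pos_iff.2 ⟨a⟩
  have h3 : Fintype.card {u : α // u ≠ b} = Fintype.card α - 1 := by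
    convert this
  omega

variable [Fintype E]

lemma cutn_mapV (G : Multigraph V E) (π : V → V') (S : Set V') :
    (G.mapV π).cutn S = G.cutn (π ⁻¹' S) := by
  classical
  unfold cutn
  congr 1
  ext e
  simp [cross_mapV]

lemma cutEq_mapV (G : Multigraph V E) (π : V → V') (x y : V) (hg : Glues π x y) (u v : V) :
    (G.mapV π).CutEq (π u) (π v) ↔
      ∀ S : Set V, (x ∈ S ↔ y ∈ S) → u ∈ S → v ∉ S → 3 ≤ G.cutn S := by
  constructor
  · intro h S hS hu hv
    have hpre : π ⁻¹' (π '' S) = S := by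
      ext w
      constructor
      · rintro ⟨z, hz, hzw⟩
        rcases (hg z w).1 hzw with rfl | ⟨rfl, rfl⟩ | ⟨rfl, rfl⟩ <;> tauto
      · intro hw; exact ⟨w, hw, rfl⟩
    have := h (π '' S) ⟨u, hu, rfl⟩ (fun hh => hv (by rw [← hpre]; exact hh))
    rwa [cutn_mapV, hpre] at this
  · intro h S hu hv
    rw [cutn_mapV]
    refine h _ ?_ hu hv
    have : π x = π y := (hg x y).2 (by tauto)
    simp [this]

lemma cutEq_mapV_of_eq (G : Multigraph V E) (π : V → V') (x y : V) (hg : Glues π x y)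
    (hxy : G.CutEq x y) (u v : V) : (G.mapV π).CutEq (π u) (π v) ↔ G.CutEq u v := by
  rw [cutEq_mapV G π x y hg]
  constructor
  · intro h S hu hv
    by_cases hx : x ∈ S <;> by_cases hy : y ∈ S
    · exact h S (by tauto) hu hv
    · exact hxy S hx hy
    · exact G.cutSetoid.iseqv.symm hxy S hy hx
    · exact h S (by tauto) hu hv
  · intro h S _ hu hv
    exact h S hu hv

/-- Basic uncrossing. -/
lemma uncross (G : Multigraph V E) (x y : V) (e : E) (he : G.ends e = s(x, y)) (u v : V)
    (S R : Set V) (hS : G.cutn S ≤ 2) (hR : G.cutn R ≤ 2)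
    (hu : u ∈ S) (hv : v ∉ S) (hx : x ∈ S) (hy : y ∉ S) (huR : u ∈ R) (hxR : x ∉ R) :
    ∃ T : Set V, (x ∈ T ↔ y ∈ T) ∧ (u ∈ T ∧ v ∉ T ∨ v ∈ T ∧ u ∉ T) ∧ G.cutn T ≤ 2 := by
  classical
  by_cases hyR : y ∈ R
  · refine ⟨S ∩ R, by simp; tauto, by simp; tauto, ?_⟩
    have key : G.cutn (S ∩ R) + 2 * #{f : E | f = e} ≤ G.cutn S + G.cutn R := by
      unfold cutn
      simp only [Finset.card_filter, Finset.mul_sum, ← Finset.sum_add_distrib]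
      apply Finset.sum_le_sum
      intro f _
      by_cases hf : f = e
      · subst hf
        simp only [cross_iff he, Set.mem_inter_iff]
        simp [hx, hy, hxR, hyR]
      · simp only [cross_iff (G.ends_out f), Set.mem_inter_iff, hf]
        by_cases h1 : (G.ends f).out.1 ∈ S <;> by_cases h2 : (G.ends f).out.2 ∈ S <;>
        by_cases h3 : (G.ends f).out.1 ∈ R <;> by_cases h4 : (G.ends f).out.2 ∈ R <;>
        simp [h1, h2, h3, h4]
    have : #{f : E | f = e} = 1 := Finset.card_eq_one.2 ⟨e, by ext f; rw [Finset.mem_filter, Finset.mem_singleton]; simp⟩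
    omega
  by_cases hvR : v ∉ R
  · exact ⟨R, by tauto, by tauto, hR⟩
  have key : G.cutn (S ∩ R) + G.cutn (R \ S) + 2 * #{f : E | f = e} ≤
      2 * G.cutn S + G.cutn R := by
    unfold cutn
    simp only [Finset.card_filter, Finset.mul_sum, ← Finset.sum_add_distrib]
    apply Finset.sum_le_sum
    intro f _
    by_cases hf : f = e
    · subst hf
      simp only [cross_iff he, Set.mem_inter_iff, Set.mem_sdiff]
      simp [hx, hy, hxR, hyR]
    · simp only [cross_iff (G.ends_out f), Set.mem_inter_iff, Set.mem_sdiff, hf]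
      by_cases h1 : (G.ends f).out.1 ∈ S <;> by_cases h2 : (G.ends f).out.2 ∈ S <;>
      by_cases h3 : (G.ends f).out.1 ∈ R <;> by_cases h4 : (G.ends f).out.2 ∈ R <;>
      simp [h1, h2, h3, h4]
  have : #{f : E | f = e} = 1 := Finset.card_eq_one.2 ⟨e, by ext f; rw [Finset.mem_filter, Finset.mem_singleton]; simp⟩
  by_cases h1 : G.cutn (S ∩ R) ≤ 2
  · exact ⟨S ∩ R, by simp; tauto, by simp; tauto, h1⟩
  · exact ⟨R \ S, by simp; tauto, by simp; tauto, by omega⟩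

lemma uncross' (G : Multigraph V E) (x y : V) (e : E) (he : G.ends e = s(x, y)) (u v : V)
    (hux : ¬ G.CutEq u x) (huy : ¬ G.CutEq u y) (huv : ¬ G.CutEq u v) :
    ∃ T : Set V, (x ∈ T ↔ y ∈ T) ∧ (u ∈ T ∧ v ∉ T ∨ v ∈ T ∧ u ∉ T) ∧ G.cutn T ≤ 2 := by
  unfold CutEq at hux huy huv
  push Not at hux huy huv
  obtain ⟨S, hu, hv, hS⟩ := huv
  obtain ⟨R, huR, hxR, hR⟩ := hux
  obtain ⟨Q, huQ, hyQ, hQ⟩ := huy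
  by_cases hx : x ∈ S <;> by_cases hy : y ∈ S
  · exact ⟨S, by tauto, by tauto, by omega⟩
  · exact uncross G x y e he u v S R (by omega) (by omega) hu hv hx hy huR hxR
  · obtain ⟨T, h1, h2, h3⟩ := uncross G y x e (by rw [he, Sym2.eq_swap]) u v S Q (by omega)
      (by omega) hu hv hy hx huQ hyQ
    exact ⟨T, h1.symm, h2, h3⟩
  · exact ⟨S, by tauto, by tauto, by omega⟩

lemma cutEq_mapV_of_ne (G : Multigraph V E) (π : V → V') (x y : V) (hg : Glues π x y)
    (e : E) (he : G.ends e = s(x, y)) (u v : V) :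
    (G.mapV π).CutEq (π u) (π v) ↔
      G.CutEq u v ∨ (G.CutEq u x ∧ G.CutEq v y) ∨ (G.CutEq u y ∧ G.CutEq v x) := by
  have E1 := G.cutSetoid.iseqv
  have sy : ∀ {a b}, G.CutEq a b → G.CutEq b a := fun h => E1.symm h
  have tr : ∀ {a b c}, G.CutEq a b → G.CutEq b c → G.CutEq a c := fun h h' => E1.trans h h'
  constructor
  · intro h
    rw [cutEq_mapV G π x y hg] at h
    by_contra hcon
    have main : ∃ T : Set V, (x ∈ T ↔ y ∈ T) ∧ (u ∈ T ∧ v ∉ T ∨ v ∈ T ∧ u ∉ T) ∧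
        G.cutn T ≤ 2 := by
      by_cases hu : G.CutEq u x ∨ G.CutEq u y
      · have hv : ¬ G.CutEq v x ∧ ¬ G.CutEq v y ∧ ¬ G.CutEq v u := by
          refine ⟨fun hh => ?_, fun hh => ?_, fun hh => hcon (Or.inl (sy hh))⟩
          · rcases hu with hu | hu
            · exact hcon (Or.inl (tr hu (sy hh)))
            · tauto
          · rcases hu with hu | hu
            · tauto
            · exact hcon (Or.inl (tr hu (sy hh)))
        obtain ⟨T, h1, h2, h3⟩ := uncross' G x y e he v u hv.1 hv.2.1 hv.2.2
        exact ⟨T, h1, h2.symm, h3⟩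
      · exact uncross' G x y e he u v (by tauto) (by tauto) (by tauto)
    obtain ⟨T, h1, h2 | h2, h3⟩ := main
    · have := h T h1 h2.1 h2.2; omega
    · have := h Tᶜ (by simp; tauto) h2.2 (by simpa using h2.1)
      rw [cutn_compl] at this
      omega
  · rintro (h | ⟨h, h'⟩ | ⟨h, h'⟩) <;> rw [cutEq_mapV G π x y hg]
    · intro S _ hu hv; exact h S hu hv
    · intro S hS hu hv
      by_cases hx : x ∈ S
      · exact sy h' S (by tauto) hv
      · exact h S hu hx
    · intro S hS hu hv
      by_cases hx : x ∈ S
      · exact sy h' S (by tauto) hv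
      · exact h S hu (by tauto)

lemma card_quot_eq (G : Multigraph V E) (π : V → V') (hs : Function.Surjective π) (x y : V)
    (hg : Glues π x y) (hxy : G.CutEq x y) :
    Nat.card (Quotient G.cutSetoid) = Nat.card (Quotient (G.mapV π).cutSetoid) := by
  refine Nat.card_congr (Equiv.ofBijective
    (Quotient.map (sa := G.cutSetoid) (sb := (G.mapV π).cutSetoid) π
      (fun u v h => (cutEq_mapV_of_eq G π x y hg hxy u v).2 h)) ⟨?_, ?_⟩)
  · intro a b
    refine Quotient.inductionOn₂ a b (fun u v h => ?_)
    exact Quotient.sound ((cutEq_mapV_of_eq G π x y hg hxy u v).1 (Quotient.exact h))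
  · intro b
    refine Quotient.inductionOn b (fun w => ?_)
    obtain ⟨u, rfl⟩ := hs w
    exact ⟨Quotient.mk _ u, rfl⟩

lemma card_quot_ne [Finite V] (G : Multigraph V E) (π : V → V') (hs : Function.Surjective π)
    (x y : V) (hg : Glues π x y) (e : E) (he : G.ends e = s(x, y)) (hxy : ¬ G.CutEq x y) :
    Nat.card (Quotient G.cutSetoid) = Nat.card (Quotient (G.mapV π).cutSetoid) + 1 := by
  refine card_glue (Quotient.map (sa := G.cutSetoid) (sb := (G.mapV π).cutSetoid) π
      (fun u v h => (cutEq_mapV_of_ne G π x y hg e he u v).2 (Or.inl h))) ?_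
      (Quotient.mk _ x) (Quotient.mk _ y) (fun h => hxy (Quotient.exact h)) ?_
  · intro b
    refine Quotient.inductionOn b (fun w => ?_)
    obtain ⟨u, rfl⟩ := hs w
    exact ⟨Quotient.mk _ u, rfl⟩
  · intro a b
    refine Quotient.inductionOn₂ a b (fun u v => ?_)
    have h := cutEq_mapV_of_ne G π x y hg e he u v
    have q : ∀ a b, (Quotient.mk G.cutSetoid a = Quotient.mk G.cutSetoid b) ↔ G.CutEq a b :=
      fun a b => ⟨fun h => Quotient.exact h, fun h => Quotient.sound h⟩
    simp only [q]
    rw [← h]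
    exact ⟨fun h => Quotient.exact h, fun h => Quotient.sound h⟩

end Contract

end Multigraph

namespace Multigraph

section Walks

variable {V V' E : Type*} {A : Type*} [AddCommGroup A]

lemma wSum_append (h : V ⊕ E → A) (p q : List (V × E)) :
    wSum h (p ++ q) = wSum h p + wSum h q := by
  simp [wSum]

lemma wSum_nil (h : V ⊕ E → A) : wSum h [] = 0 := by
  simp [wSum]

lemma IsChain.append {G : Multigraph V E} : ∀ {p q : List (V × E)} {x y z : V},
    G.IsChain x y p → G.IsChain y z q → G.IsChain x z (p ++ q)
  | [], q, x, y, z, h, h' => by cases h; exact h'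
  | (v, e) :: p, q, x, y, z, ⟨h1, w, h2, h3⟩, h' => ⟨h1, w, h2, h3.append h'⟩

lemma IsChain.split {G : Multigraph V E} : ∀ {p q : List (V × E)} {x z : V},
    G.IsChain x z (p ++ q) → ∃ y, G.IsChain x y p ∧ G.IsChain y z q
  | [], q, x, z, h => ⟨x, rfl, h⟩
  | (v, e) :: p, q, x, z, ⟨h1, w, h2, h3⟩ => by
    obtain ⟨y, h4, h5⟩ := IsChain.split h3
    exact ⟨y, ⟨h1, w, h2, h4⟩, h5⟩

lemma IsChain.single {G : Multigraph V E} {x y : V} {e : E} (h : G.ends e = s(x, y)) :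
    G.IsChain x y [(x, e)] := ⟨rfl, y, h, rfl⟩

lemma IsChain.rev {G : Multigraph V E} (h : V ⊕ E → A) : ∀ {p : List (V × E)} {x y : V},
    G.IsChain x y p → ∃ q, G.IsChain y x q ∧ q.map Prod.snd = (p.map Prod.snd).reverse ∧
      wSum h q + h (Sum.inl x) = wSum h p + h (Sum.inl y)
  | [], x, y, hc => by cases hc; exact ⟨[], rfl, by simp, rfl⟩
  | (v, e) :: p, x, y, ⟨h1, w, h2, h3⟩ => by
    subst h1
    obtain ⟨q, hq1, hq2, hq3⟩ := h3.rev h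
    refine ⟨q ++ [(w, e)], hq1.append (IsChain.single (by rw [h2, Sym2.eq_swap])),
      by simp [hq2], ?_⟩
    rw [wSum_append, wSum_cons, wSum_cons, wSum_nil]
    simp only
    calc _ = (wSum h q + h (Sum.inl w)) + (h (Sum.inr e) + h (Sum.inl v)) := by abel
      _ = _ := by rw [hq3]; abel

/-- Gauge transformations. -/
lemma gauge (G : Multigraph V E) (q : V → A) : ∃ h : V ⊕ E → A, G.BalancedW h ∧
    (∀ v, h (Sum.inl v) = q v + q v) ∧ ∀ e u v, G.ends e = s(u, v) → h (Sum.inr e) = -(q u + q v) := by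
  let F : Sym2 V → A := Sym2.lift ⟨fun a b => -(q a + q b), fun a b => by beta_reduce; rw [add_comm]⟩
  have hF : ∀ u v, F s(u, v) = -(q u + q v) := fun u v => rfl
  refine ⟨Sum.elim (fun v => q v + q v) (fun e => F (G.ends e)), ?_, fun _ => rfl, ?_⟩
  · have : ∀ (p : List (V × E)) (x y : V), G.IsChain x y p →
        wSum (Sum.elim (fun v => q v + q v) (fun e => F (G.ends e))) p = q x - q y := by
      intro p
      induction p with
      | nil => intro x y h; cases h; simp [wSum_nil]
      | cons a p ih =>
        rintro x y ⟨h1, w, h2, h3⟩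
        rw [wSum_cons, ih _ _ h3, h1]
        simp only [Sum.elim_inl, Sum.elim_inr, h2, hF]
        abel
    intro x p hp
    rw [this p x x hp.1, sub_self]
  · intro e u v h
    simp [h, hF]

open Classical in
/-- Value of a shift along a trail. -/
noncomputable def shval (δ : A) (I J s : Prop) : A :=
  if I then (if J then 0 else if s then 0 else δ) else if J then (if s then -δ else 0) else 0

open Classical in
lemma shstep (δ gf : A) (I J s w b F C : Prop) (ih : (I ↔ J) ↔ (w ↔ b))
    (h : F ∧ gf = 0 ∧ ¬ I ∧ ¬ (s ↔ w) ∨ (¬ F ∧ C) ∧ gf = -δ ∧ ¬ J ∧ ¬ (s ↔ w) ∨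
      (¬ F ∧ ¬ C) ∧ gf = (if s then 0 else -δ) ∧ (s ↔ w)) :
    ((F ∨ I ↔ (F ≠ True ∧ C) ∨ J) ↔ (s ↔ b)) ∧
      (if s then 0 else δ) + gf + shval δ I J w = shval δ (F ∨ I) ((F ≠ True ∧ C) ∨ J) s := by
  rcases h with ⟨h1, rfl, h2, h3⟩ | ⟨⟨h1, h4⟩, rfl, h2, h3⟩ | ⟨⟨h1, h4⟩, rfl, h3⟩
  · by_cases hs : s <;> by_cases hw : w <;> by_cases hb : b <;> by_cases hJ : J <;>
      simp_all [shval]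
  · by_cases hs : s <;> by_cases hw : w <;> by_cases hb : b <;> by_cases hI : I <;>
      simp_all [shval]
  · by_cases hs : s <;> by_cases hw : w <;> by_cases hb : b <;> by_cases hI : I <;>
      by_cases hJ : J <;> simp_all [shval]

open Classical in
/-- Shifting one side of a small cut. -/
lemma shift (G : Multigraph V E) (S : Set V) (e : E) (he : G.Cross S e)
    (hS : ∀ f g, G.Cross S f → G.Cross S g → f ≠ e → g ≠ e → f = g) (δ : A) :
    ∃ h : V ⊕ E → A, G.BalancedW h ∧ (∀ v, h (Sum.inl v) = if v ∈ S then 0 else δ) ∧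
      h (Sum.inr e) = 0 := by
  let g : E → A := fun f => if f = e then 0 else if G.Cross S f then -δ else
    if (G.ends f).out.1 ∈ S then 0 else -δ
  let h : V ⊕ E → A := Sum.elim (fun v => if v ∈ S then 0 else δ) g
  refine ⟨h, ?_, fun _ => rfl, by simp [h, g]⟩
  have hg : ∀ f u v, G.ends f = s(u, v) → f ≠ e → ¬ G.Cross S f →
      g f = if u ∈ S then 0 else -δ := by
    intro f u v hf hne hc
    have h1 := hc
    have h2 := hc
    rw [cross_iff hf] at h1
    rw [cross_iff (G.ends_out f)] at h2
    simp only [g, if_neg hne, if_neg hc]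
    have : s((G.ends f).out.1, (G.ends f).out.2) = s(u, v) := by rw [← G.ends_out f, hf]
    rcases Sym2.eq_iff.1 this with ⟨ha, hb⟩ | ⟨ha, hb⟩
    · rw [ha]
    · rw [ha] at h2 ⊢
      congr 1
      apply propext
      tauto
  have main : ∀ (p : List (V × E)) (a b : V), G.IsChain a b p → (p.map Prod.snd).Nodup →
      (((e ∈ p.map Prod.snd) ↔ ∃ f ∈ p.map Prod.snd, f ≠ e ∧ G.Cross S f) ↔ (a ∈ S ↔ b ∈ S)) ∧
      wSum h p = shval δ (e ∈ p.map Prod.snd) (∃ f ∈ p.map Prod.snd, f ≠ e ∧ G.Cross S f) (a ∈ S) := by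
    intro p
    induction p with
    | nil => intro a b hc _; cases hc; simp [wSum_nil, shval]
    | cons d p ih =>
      obtain ⟨v, f⟩ := d
      rintro a b ⟨rfl, w, hf, hc⟩ hn
      simp only [List.map_cons, List.nodup_cons] at hn
      obtain ⟨ih1, ih2⟩ := ih w b hc hn.2
      have hex : (∃ f' ∈ (((v, f) :: p).map Prod.snd), f' ≠ e ∧ G.Cross S f') ↔
          (f ≠ e ∧ G.Cross S f) ∨ ∃ f' ∈ p.map Prod.snd, f' ≠ e ∧ G.Cross S f' := by
        simp
      have hmem : e ∈ (((v, f) :: p).map Prod.snd) ↔ f = e ∨ e ∈ p.map Prod.snd := by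
        simp [eq_comm]
      rw [wSum_cons, ih2, hex, hmem]
      generalize hJ : (∃ f' ∈ p.map Prod.snd, f' ≠ e ∧ G.Cross S f') = J at *
      simp only [h, Sum.elim_inl, Sum.elim_inr]
      have hne : (f ≠ e) = ((f = e) ≠ True) := by simp
      rw [hne]
      refine shstep δ (g f) _ _ _ _ _ _ _ ih1 ?_
      by_cases hfe : f = e
      · subst hfe
        exact Or.inl ⟨rfl, by simp [g], hn.1, (cross_iff hf).1 he⟩
      · by_cases hcr : G.Cross S f
        · refine Or.inr (Or.inl ⟨⟨hfe, hcr⟩, by simp [g, hfe, hcr], ?_, (cross_iff hf).1 hcr⟩)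
          rw [← hJ]
          rintro ⟨f', h1, h2, h3⟩
          have := hS f f' hcr h3 hfe h2
          subst this
          exact hn.1 h1
        · have hx := hcr
          rw [cross_iff hf] at hx
          exact Or.inr (Or.inr ⟨⟨hfe, hcr⟩, hg f v w hf hfe hcr, not_not.1 hx⟩)
  intro a p hp
  obtain ⟨h1, h2⟩ := main p a a hp.1 hp.2
  simp only [iff_self, iff_true] at h1
  rw [h2]
  by_cases hI : e ∈ p.map Prod.snd
  · have hJ := h1.1 hI
    simp only [shval, if_pos hI, if_pos hJ]
  · have hJ := fun h => hI (h1.2 h)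
    simp only [shval, if_neg hI, if_neg hJ]

/-- Pulling back balanced functions. -/
lemma balanced_pull (G : Multigraph V E) (π : V → V') (h' : V' ⊕ E → A)
    (hb : (G.mapV π).BalancedW h') : G.BalancedW (h' ∘ Sum.map π id) := by
  have key : ∀ (p : List (V × E)) (a b : V), G.IsChain a b p →
      (G.mapV π).IsChain (π a) (π b) (p.map (Prod.map π id)) ∧
      wSum (h' ∘ Sum.map π id) p = wSum h' (p.map (Prod.map π id)) := by
    intro p
    induction p with
    | nil => intro a b hc; cases hc; exact ⟨rfl, by simp [wSum]⟩
    | cons d p ih =>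
      rintro a b ⟨h1, w, h2, h3⟩
      obtain ⟨i1, i2⟩ := ih w b h3
      refine ⟨⟨by simp [h1], π w, ?_, i1⟩, ?_⟩
      · change (G.ends d.2).map π = _
        rw [h2]; rfl
      · rw [List.map_cons, wSum_cons, wSum_cons, i2]; rfl
  intro a p hp
  obtain ⟨h1, h2⟩ := key p a a hp.1
  rw [h2]
  refine hb _ _ ⟨h1, ?_⟩
  have : (p.map (Prod.map π id)).map Prod.snd = p.map Prod.snd := by
    simp
  rw [this]; exact hp.2

lemma balanced_multi [DecidableEq E] (G : Multigraph V E) (π : V → V') (x y : V) (hg : Glues π x y) (e : E)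
    (he : G.ends e = s(x, y)) (h : V ⊕ E → A) (hb : G.BalancedW h)
    (hx : h (Sum.inl x) + h (Sum.inr e) = 0) (hy : h (Sum.inl y) + h (Sum.inr e) = 0) :
    ∀ (n : ℕ) (p : List (V × E)) (a b : V), p.length ≤ n → G.IsChain a b p →
      (∀ f, f ≠ e → (p.map Prod.snd).count f ≤ 1) →
      π a = π b → wSum h p = 0 := by
  intro n
  induction n with
  | zero =>
    intro p a b hl hc _ _
    have : p = [] := List.length_eq_zero_iff.1 (by omega)
    subst this; simp [wSum_nil]
  | succ n ih =>
    intro p a b hl hc hn hab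
    by_cases hep : e ∈ p.map Prod.snd
    · obtain ⟨⟨u, e'⟩, hm, h1⟩ := List.mem_map.1 hep
      simp only at h1
      subst h1
      obtain ⟨p1, p2, rfl⟩ := List.append_of_mem hm
      obtain ⟨u', hc1, rfl, w, hw, hc2⟩ := hc.split
      have huw : π w = π u ∧ h (Sum.inl u) + h (Sum.inr e') = 0 := by
        rw [he] at hw
        rcases Sym2.eq_iff.1 hw with ⟨rfl, rfl⟩ | ⟨rfl, rfl⟩
        · exact ⟨(hg _ _).2 (by tauto), hx⟩
        · exact ⟨(hg _ _).2 (by tauto), hy⟩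
      simp only [List.length_append, List.length_cons] at hl
      rw [wSum_append, wSum_cons, huw.2, zero_add]
      by_cases hau : π a = π u
      · rw [ih p1 a u (by omega) hc1 ?_ hau, ih p2 w b (by omega) hc2 ?_
          (by rw [huw.1, ← hau, hab]), add_zero]
        · intro f hf
          have := hn f hf
          simp only [List.map_append, List.map_cons, List.count_append, List.count_cons] at this
          omega
        · intro f hf
          have := hn f hf
          simp only [List.map_append, List.map_cons, List.count_append, List.count_cons] at this
          omega
      · have hab' : a = b := by
          rcases (hg a b).1 hab with h | ⟨rfl, rfl⟩ | ⟨rfl, rfl⟩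
          · exact h
          · exfalso; apply hau
            rw [he] at hw
            rcases Sym2.eq_iff.1 hw with ⟨rfl, rfl⟩ | ⟨rfl, rfl⟩
            · rfl
            · exact hab
          · exfalso; apply hau
            rw [he] at hw
            rcases Sym2.eq_iff.1 hw with ⟨rfl, rfl⟩ | ⟨rfl, rfl⟩
            · exact hab
            · rfl
        subst hab'
        rw [add_comm, ← wSum_append]
        refine ih (p2 ++ p1) w u (by simp; omega) (hc2.append hc1) ?_ huw.1
        intro f hf
        have := hn f hf
        simp only [List.map_append, List.map_cons, List.count_append, List.count_cons] at this ⊢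
        omega
    · have hnd : (p.map Prod.snd).Nodup := by
        rw [List.nodup_iff_count_le_one]
        intro f
        by_cases hf : f = e
        · subst hf; rw [List.count_eq_zero_of_not_mem hep]; omega
        · exact hn f hf
      have fin : ∀ a b, G.IsChain a b p → G.ends e = s(b, a) →
          h (Sum.inl b) + h (Sum.inr e) = 0 → wSum h p = 0 := by
        intro a b hc hba h0
        have := hb a (p ++ [(b, e)]) ⟨hc.append (IsChain.single hba), by
          rw [List.map_append, List.nodup_append]
          refine ⟨hnd, by simp, ?_⟩
          intro c hc' d hd
          simp at hd
          subst hd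
          rintro rfl
          exact hep hc'⟩
        rw [wSum_append, wSum_cons, wSum_nil] at this
        simpa [h0] using this
      rcases (hg a b).1 hab with rfl | ⟨rfl, rfl⟩ | ⟨rfl, rfl⟩
      · exact hb a p ⟨hc, hnd⟩
      · exact fin a b hc (by rw [he, Sym2.eq_swap]) hy
      · exact fin a b hc he hx

lemma balanced_push [DecidableEq E] (G : Multigraph V E) (π : V → V') (hs : Function.Surjective π)
    (x y : V) (hg : Glues π x y) (e : E)
    (he : G.ends e = s(x, y)) (h' : V' ⊕ E → A) (hb : G.BalancedW (h' ∘ Sum.map π id))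
    (hx : h' (Sum.inl (π x)) + h' (Sum.inr e) = 0) : (G.mapV π).BalancedW h' := by
  have hy : h' (Sum.inl (π y)) + h' (Sum.inr e) = 0 := by
    rw [← hx, (hg x y).2 (by tauto)]
  set h := h' ∘ Sum.map π id with hh
  have lift : ∀ (p' : List (V' × E)) (X Y : V') (a : V), (G.mapV π).IsChain X Y p' → π a = X →
      ∃ p b, G.IsChain a b p ∧ π b = Y ∧ wSum h p = wSum h' p' ∧
        ∀ f, f ≠ e → (p.map Prod.snd).count f = (p'.map Prod.snd).count f := by
    intro p'
    induction p' with
    | nil => intro X Y a hc ha; cases hc; exact ⟨[], a, rfl, ha, by simp [wSum_nil], by simp⟩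
    | cons d p' ih =>
      obtain ⟨v, f⟩ := d
      rintro X Y a ⟨rfl, W, hf, hc⟩ ha
      have hcd : ∃ c d, G.ends f = s(c, d) ∧ π c = v ∧ π d = W := by
        have h2 : (G.ends f).map π = s(v, W) := hf
        rw [G.ends_out f, Sym2.map_mk] at h2
        rcases Sym2.eq_iff.1 h2 with ⟨h3, h4⟩ | ⟨h3, h4⟩
        · exact ⟨_, _, G.ends_out f, h3, h4⟩
        · exact ⟨_, _, (G.ends_out f).trans Sym2.eq_swap, h4, h3⟩
      obtain ⟨c, d, hcd, hc', hd'⟩ := hcd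
      obtain ⟨p, b, i1, i2, i3, i4⟩ := ih W Y d hc hd'
      have base : G.IsChain c b ((c, f) :: p) := ⟨rfl, d, hcd, i1⟩
      have hsum : wSum h ((c, f) :: p) = wSum h' ((v, f) :: p') := by
        rw [wSum_cons, wSum_cons, i3, ← hc']; rfl
      have jump : G.ends e = s(a, c) → h (Sum.inl a) + h (Sum.inr e) = 0 →
          ∃ p b, G.IsChain a b p ∧ π b = Y ∧ wSum h p = wSum h' ((v, f) :: p') ∧
        ∀ g, g ≠ e → (p.map Prod.snd).count g = (((v, f) :: p').map Prod.snd).count g := by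
        intro hac h0
        refine ⟨(a, e) :: (c, f) :: p, b, ⟨rfl, c, hac, base⟩, i2, ?_, ?_⟩
        · rw [wSum_cons, hsum]; simp only [h0, zero_add]
        · intro g hg
          simp only [List.map_cons, List.count_cons, i4 g hg]
          simp [Ne.symm hg]
      rcases (hg a c).1 (ha.trans hc'.symm) with rfl | ⟨rfl, rfl⟩ | ⟨rfl, rfl⟩
      · exact ⟨_, b, base, i2, hsum, fun g hg => by
          simp only [List.map_cons, List.count_cons, i4 g hg]⟩
      · exact jump he hx
      · exact jump (by rw [he, Sym2.eq_swap]) hy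
  intro X p' hp'
  obtain ⟨a, ha⟩ := hs X
  obtain ⟨p, b, i1, i2, i3, i4⟩ := lift p' X X a hp'.1 ha
  rw [← i3]
  refine balanced_multi G π x y hg e he h hb hx hy p.length p a b le_rfl i1 ?_
    (ha.trans i2.symm)
  intro f hf
  have h1 := List.nodup_iff_count_le_one.1 hp'.2 f
  have h2 := i4 f hf
  omega

/-- Adjacent equivalent vertices. -/
lemma adj_sum (G : Multigraph V E) (x y : V) (hxy : x ≠ y) (hk : G.KConn 3 x y) (e : E)
    (he : G.ends e = s(x, y)) (h : V ⊕ E → A) (hb : G.BalancedW h) :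
    (h (Sum.inl x) + h (Sum.inr e)) + (h (Sum.inl y) + h (Sum.inr e)) = 0 := by
  rcases hk with hk | ⟨P, h1, h2⟩
  · exact absurd hk hxy
  have hij : ∃ i j, i ≠ j ∧ e ∉ (P i).map Prod.snd ∧ e ∉ (P j).map Prod.snd := by
    have h01 := h2 0 1 (by decide) e
    have h02 := h2 0 2 (by decide) e
    have h12 := h2 1 2 (by decide) e
    by_cases h0 : e ∈ (P 0).map Prod.snd
    · exact ⟨1, 2, by decide, h01 h0, h02 h0⟩
    · by_cases h1 : e ∈ (P 1).map Prod.snd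
      · exact ⟨0, 2, by decide, h0, h12 h1⟩
      · exact ⟨0, 1, by decide, h0, h1⟩
  obtain ⟨i, j, hne, hi, hj⟩ := hij
  have close : ∀ i, e ∉ (P i).map Prod.snd →
      wSum h (P i) + (h (Sum.inl y) + h (Sum.inr e)) = 0 := by
    intro i hi
    have := hb x (P i ++ [(y, e)]) ⟨(h1 i).1.append (IsChain.single (by rw [he, Sym2.eq_swap])), by
      rw [List.map_append, List.nodup_append]
      refine ⟨(h1 i).2, by simp, ?_⟩
      intro c hc' d hd
      simp at hd
      subst hd
      rintro rfl
      exact hi hc'⟩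
    rw [wSum_append, wSum_cons, wSum_nil] at this
    simpa using this
  obtain ⟨q, q1, q2, q3⟩ := (h1 j).1.rev h
  have hc := hb x (P i ++ q) ⟨(h1 i).1.append q1, by
    rw [List.map_append, List.nodup_append, q2]
    refine ⟨(h1 i).2, List.nodup_reverse.2 (h1 j).2, ?_⟩
    intro c hc d hd
    rintro rfl
    exact h2 i j hne c hc (List.mem_reverse.1 hd)⟩
  rw [wSum_append] at hc
  have c1 := close i hi
  have c2 := close j hj
  have e1 : wSum h (P i) = -(h (Sum.inl y) + h (Sum.inr e)) := eq_neg_of_add_eq_zero_left c1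
  have e2 : wSum h (P j) = -(h (Sum.inl y) + h (Sum.inr e)) := eq_neg_of_add_eq_zero_left c2
  have e3 : wSum h q = wSum h (P j) + h (Sum.inl y) - h (Sum.inl x) := eq_sub_of_add_eq q3
  rw [e3, e1, e2] at hc
  rw [← neg_eq_zero, ← hc]
  abel

end Walks

end Multigraph

namespace Multigraph

section Main

/-- Connectedness through closed sets. -/
def Conn {V E : Type*} (G : Multigraph V E) : Prop :=
  Nonempty V ∧ ∀ S : Set V, (∀ f u w, G.ends f = s(u, w) → u ∈ S → w ∈ S) →
    ∀ u v, u ∈ S → v ∈ S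

lemma conn_of_con {V E : Type*} (G : Multigraph V E) (h : G.con = 1) : G.Conn := by
  rw [con, conk, Nat.card_eq_one_iff_unique] at h
  obtain ⟨h1, ⟨h2⟩⟩ := h
  refine ⟨⟨h2.out⟩, ?_⟩
  intro S hS u v hu
  have huv : Relation.EqvGen (G.KConn 1) u v := Quotient.exact (h1.elim (Quotient.mk _ u) (Quotient.mk _ v))
  have hS' : ∀ (p : List (V × E)) a b, G.IsChain a b p → (a ∈ S ↔ b ∈ S) := by
    intro p
    induction p with
    | nil => intro a b h; cases h; rfl
    | cons d p ih =>
      rintro a b ⟨_, w, h2, h3⟩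
      rw [← ih w b h3]
      exact ⟨hS d.2 a w h2, hS d.2 w a (by rw [h2, Sym2.eq_swap])⟩
  have : u ∈ S ↔ v ∈ S := by
    clear hu
    induction huv with
    | rel a b h =>
      rcases h with rfl | ⟨P, hP, _⟩
      · rfl
      · exact hS' _ _ _ (hP 0).1
    | refl a => rfl
    | symm a b _ h => exact h.symm
    | trans a b c _ _ h h' => exact h.trans h'
  exact this.1 hu

variable {V V' E : Type*} {A : Type*} [AddCommGroup A]

lemma card_step [DecidableEq E] [Finite A] [Finite V] [Finite E] {B : Type*} [AddCommGroup B]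
    (G : Multigraph V E) (π : V → V')
    (hs : Function.Surjective π) (x y : V) (hg : Glues π x y) (e : E) (he : G.ends e = s(x, y))
    (Φ : G.Wgroup A →+ B) (hΦ : Function.Surjective Φ)
    (hk : ∀ h, Φ h = 0 ↔ h.1 (Sum.inl x) + h.1 (Sum.inr e) = 0 ∧
      h.1 (Sum.inl y) + h.1 (Sum.inr e) = 0) :
    Nat.card (G.Wgroup A) = Nat.card ((G.mapV π).Wgroup A) * Nat.card B := by
  have hxy : π x = π y := (hg x y).2 (by tauto)
  have h0 : ∀ h' ∈ (G.mapV π).Wgroup A, h' (Sum.inl (π x)) + h' (Sum.inr e) = 0 := by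
    intro h' hh'
    have := hh' (π x) [(π x, e)] ⟨IsChain.single (by
      change (G.ends e).map π = _
      rw [he, Sym2.map_mk, hxy]), by simp⟩
    rw [wSum_cons, wSum_nil] at this
    simpa using this
  have eqv : (G.mapV π).Wgroup A ≃ Φ.ker := Equiv.ofBijective
    (fun h' => ⟨⟨h'.1 ∘ Sum.map π id, balanced_pull G π h'.1 h'.2⟩, by
      rw [AddMonoidHom.mem_ker, hk]
      have := h0 h'.1 h'.2
      refine ⟨this, ?_⟩
      rw [hxy] at this; exact this⟩) (by
    constructor
    · rintro ⟨a, ha⟩ ⟨b, hb⟩ hab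
      have hab : a ∘ Sum.map π id = b ∘ Sum.map π id := congrArg (fun t => t.1.1) hab
      apply Subtype.ext
      change a = b
      funext z
      rcases z with z | z
      · obtain ⟨u, rfl⟩ := hs z
        exact congrFun hab (Sum.inl u)
      · exact congrFun hab (Sum.inr z)
    · rintro ⟨⟨h, hh⟩, hker⟩
      rw [AddMonoidHom.mem_ker, hk] at hker
      obtain ⟨k1, k2⟩ := hker
      simp only at k1 k2
      have heq : h (Sum.inl x) = h (Sum.inl y) := add_right_cancel (k1.trans k2.symm)
      have hinv := Function.surjInv_eq hs
      let h' : V' ⊕ E → A := Sum.elim (fun z => h (Sum.inl (Function.surjInv hs z)))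
        (fun f => h (Sum.inr f))
      have hcomp : h' ∘ Sum.map π id = h := by
        funext z
        rcases z with z | z
        · simp only [h', Function.comp, Sum.map_inl, Sum.elim_inl]
          rcases (hg _ _).1 (hinv (π z)) with h3 | ⟨h3, h4⟩ | ⟨h3, h4⟩
          · rw [h3]
          · rw [h3, heq, h4]
          · rw [h3, ← heq, h4]
        · rfl
      have hb : (G.mapV π).BalancedW h' := balanced_push G π hs x y hg e he h'
        (by rw [hcomp]; exact hh) (by
          rw [← hcomp] at k1; exact k1)
      exact ⟨⟨h', hb⟩, Subtype.ext (Subtype.ext hcomp)⟩)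
  rw [Nat.card_congr eqv, AddSubgroup.card_eq_card_quotient_mul_card_addSubgroup Φ.ker, mul_comm,
    Nat.card_congr (QuotientAddGroup.quotientKerEquivOfSurjective Φ hΦ).toEquiv]

lemma conn_mapV {G : Multigraph V E} (hc : G.Conn) (π : V → V') (hs : Function.Surjective π) :
    (G.mapV π).Conn := by
  obtain ⟨⟨v⟩, h⟩ := hc
  refine ⟨⟨π v⟩, ?_⟩
  intro S hS a b ha
  obtain ⟨u, rfl⟩ := hs a
  obtain ⟨w, rfl⟩ := hs b
  refine h (π ⁻¹' S) ?_ u w ha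
  intro f u w hf hu
  refine hS f (π u) (π w) ?_ hu
  change (G.ends f).map π = _
  rw [hf, Sym2.map_mk]

lemma exists_glue (x y : V) (hxy : x ≠ y) :
    ∃ π : V → {v : V // v ≠ y}, Function.Surjective π ∧ Glues π x y := by
  classical
  refine ⟨fun v => if h : v = y then ⟨x, hxy⟩ else ⟨v, h⟩, ?_, ?_⟩
  · rintro ⟨v, hv⟩
    exact ⟨v, by simp [hv]⟩
  · intro u v
    by_cases hu : u = y <;> by_cases hv : v = y
    · simp [hu, hv]
    · subst hu
      simp only [dif_pos, dif_neg hv, Subtype.mk.injEq]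
      constructor
      · intro h; exact Or.inr (Or.inr ⟨trivial, h.symm⟩)
      · rintro (h | ⟨h, h'⟩ | ⟨h, h'⟩)
        · exact absurd h.symm hv
        · exact absurd h' hv
        · exact h'.symm
    · subst hv
      simp only [dif_pos, dif_neg hu, Subtype.mk.injEq]
      constructor
      · intro h; exact Or.inr (Or.inl ⟨h, trivial⟩)
      · rintro (h | ⟨h, h'⟩ | ⟨h, h'⟩)
        · exact absurd h hu
        · exact h
        · exact absurd h hu
    · simp [hu, hv]

lemma card_base [Fintype E] [Finite V] (G : Multigraph V E) (hc : G.Conn)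
    (hl : ∀ e x y, G.ends e = s(x, y) → x = y) :
    Nat.card (G.Wgroup A) =
      Nat.card A ^ (Nat.card V + Nat.card (Quotient G.cutSetoid) - 1) := by
  obtain ⟨⟨v⟩, h⟩ := hc
  have hv : ∀ u, u = v := fun u => h {v} (by
    rintro f a b hf ha
    rw [← hl f a b hf]; exact ha) v u rfl
  have h1 : Subsingleton V := ⟨fun a b => (hv a).trans (hv b).symm⟩
  have c1 : Nat.card V = 1 := Nat.card_eq_one_iff_unique.2 ⟨h1, ⟨v⟩⟩
  have c2 : Nat.card (Quotient G.cutSetoid) = 1 := Nat.card_eq_one_iff_unique.2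
    ⟨⟨fun a b => Quotient.inductionOn₂ a b fun a b => by rw [Subsingleton.elim a b]⟩,
      ⟨Quotient.mk _ v⟩⟩
  rw [c1, c2]
  simp only [Nat.reduceAdd, Nat.add_one_sub_one, pow_one]
  have hloop : ∀ e, G.ends e = s(v, v) := fun e => by
    rw [G.ends_out e, hv (G.ends e).out.1, hv (G.ends e).out.2]
  refine Nat.card_congr (Equiv.ofBijective (fun h => h.1 (Sum.inl v)) ⟨?_, ?_⟩)
  · rintro ⟨a, ha⟩ ⟨b, hb⟩ hab
    simp only at hab
    apply Subtype.ext
    change a = b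
    have key : ∀ c : V ⊕ E → A, G.BalancedW c → ∀ e, c (Sum.inr e) = - c (Sum.inl v) := by
      intro c hc e
      have := hc v [(v, e)] ⟨IsChain.single (hloop e), by simp⟩
      rw [wSum_cons, wSum_nil] at this
      simp only [add_zero] at this
      exact eq_neg_of_add_eq_zero_right this
    funext z
    rcases z with z | z
    · rw [hv z]; exact hab
    · rw [key a ha, key b hb, hab]
  · intro a
    refine ⟨⟨Sum.elim (fun _ => a) (fun _ => -a), ?_⟩, rfl⟩
    intro x p _
    simp [wSum]

lemma card_main [Fintype E] [DecidableEq E] [Finite A] : ∀ (n : ℕ) (V : Type*) [Finite V]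
    (G : Multigraph V E), Nat.card V = n → G.Conn →
    Nat.card (G.Wgroup A) =
      Nat.card A ^ (Nat.card V + Nat.card (Quotient G.cutSetoid) - 1) := by
  intro n
  induction n with
  | zero =>
    intro V _ G hn hc
    obtain ⟨⟨v⟩, _⟩ := hc
    have : Nonempty V := ⟨v⟩
    have := Nat.card_pos (α := V)
    omega
  | succ n ih =>
    intro V _ G hn hc
    by_cases hl : ∀ e x y, G.ends e = s(x, y) → x = y
    · exact card_base G hc hl
    push Not at hl
    obtain ⟨e, x, y, he, hxy⟩ := hl
    obtain ⟨π, hs, hg⟩ := exists_glue x y hxy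
    have cV := card_glue π hs x y hxy hg
    have IH := ih _ (G.mapV π) (by omega) (conn_mapV hc π hs)
    have hne : Nonempty {v : V // v ≠ y} := ⟨⟨x, hxy⟩⟩
    have hpos := Nat.card_pos (α := {v : V // v ≠ y})
    let Φ₁ : G.Wgroup A →+ A :=
      { toFun := fun h => h.1 (Sum.inl x) + h.1 (Sum.inr e)
        map_zero' := by simp
        map_add' := fun a b => by
          simp only [AddSubgroup.coe_add, Pi.add_apply]; abel }
    let Φ₂ : G.Wgroup A →+ A :=
      { toFun := fun h => h.1 (Sum.inl y) + h.1 (Sum.inr e)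
        map_zero' := by simp
        map_add' := fun a b => by
          simp only [AddSubgroup.coe_add, Pi.add_apply]; abel }
    have gau : ∀ a : A, ∃ h, Φ₁ h = a ∧ Φ₂ h = -a := by
      classical
      intro a
      obtain ⟨h, h1, h2, h3⟩ := gauge G (fun v => if v = x then a else 0)
      refine ⟨⟨h, h1⟩, ?_, ?_⟩
      · change h _ + h _ = a
        rw [h2, h3 e x y he]
        simp [Ne.symm hxy]
      · change h _ + h _ = -a
        rw [h2, h3 e x y he]
        simp [Ne.symm hxy]
    by_cases heq : G.CutEq x y
    · have cQ := card_quot_eq G π hs x y hg heq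
      rw [card_step G π hs x y hg e he Φ₁ (fun a => (gau a).imp fun _ h => h.1) ?_, IH, cQ, cV,
        ← pow_succ]
      · congr 1; omega
      · intro h
        have := adj_sum G x y hxy heq.kconn e he h.1 h.2
        constructor
        · intro h1
          have h1 : h.1 (Sum.inl x) + h.1 (Sum.inr e) = 0 := h1
          refine ⟨h1, ?_⟩
          rwa [h1, zero_add] at this
        · exact fun h => h.1
    · have cQ := card_quot_ne G π hs x y hg e he heq
      rw [card_step G π hs x y hg e he (Φ₁.prod Φ₂) ?_ ?_, IH, cQ, cV, Nat.card_prod, ← pow_two,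
        ← pow_add]
      · congr 1; omega
      · classical
        have heq' := heq
        unfold CutEq at heq'
        push Not at heq'
        obtain ⟨S, hxS, hyS, hS⟩ := heq'
        have hcr : G.Cross S e := ⟨x, y, he, hxS, hyS⟩
        rintro ⟨a, b⟩
        obtain ⟨h, g1, g2⟩ := gau a
        obtain ⟨k, k1, k2, k3⟩ := shift G S e hcr (by
          intro f g hf hg' hfe hge
          by_contra hfg
          have : ({e, f, g} : Finset E) ⊆ ({t | G.Cross S t} : Finset E) := by
            intro t ht
            simp only [Finset.mem_insert, Finset.mem_singleton] at ht
            rcases ht with rfl | rfl | rfl <;> simpa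
          have h3 := Finset.card_le_card this
          rw [Finset.card_eq_three.2 ⟨e, f, g, Ne.symm hfe, Ne.symm hge, hfg, rfl⟩] at h3
          have h4 : #({t | G.Cross S t} : Finset E) = G.cutn S := by
            unfold cutn; congr
          omega) (a + b)
        refine ⟨h + ⟨k, k1⟩, ?_⟩
        have e1 : Φ₁ ⟨k, k1⟩ = 0 := by
          change k _ + k _ = 0
          rw [k2, k3]; simp [hxS]
        have e2 : Φ₂ ⟨k, k1⟩ = a + b := by
          change k _ + k _ = _
          rw [k2, k3]; simp [hyS]
        rw [AddMonoidHom.prod_apply, map_add, map_add, e1, e2, g1, g2]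
        simp
      · intro h
        rw [AddMonoidHom.prod_apply, Prod.mk_eq_zero]
        rfl

end Main

end Multigraph

namespace Multigraph

variable {V E : Type*} [Fintype V] [Fintype E] [DecidableEq V] [DecidableEq E]


theorem stmt19 (G : Multigraph V E) (hconn : G.con = 1)
    (A : Type*) [AddCommGroup A] [Fintype A] :
    Nat.card {h : V ⊕ E → A // G.BalancedW h} =
      Fintype.card A ^ (Fintype.card V + G.conk 3 - 1) := by
  rw [conk_three, ← Nat.card_eq_fintype_card, ← Nat.card_eq_fintype_card]
  exact card_main (A := A) _ V G rfl (conn_of_con G hconn)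

end Multigraph
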